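/- arXiv:2511.01772 — 4 statements merged into one kernel-verified Lean document; each statement's English description precedes it below -/
import Mathlib

section
/- The additive submonoid S of ℤ³ generated by the vectors h₁=(1,0,0), h₂=(0,1,0), h₃=(0,0,1), h₄=(-2,-1,2), h₅=(1,-1,1), h₆=(2,-2,1) is pointed; that is, if u ∈ S and -u ∈ S then u = 0. -/
/-!
An additive map `f` that is positive on the generators of a submonoid is positive on all of its
nonzero elements. If the submonoid contained both `u` and `-u` with `u ≠ 0`, then
`0 = f u + f (-u) > 0`, which is absurd. For `S`, the functional `u ↦ u₀ + u₁ + 2u₂`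
takes the values `1, 1, 2, 1, 2, 2` on the generators.
-/

/-- The six generators of the semigroup `S`. -/
def h₁ : Fin 3 → ℤ := ![1, 0, 0]
def h₂ : Fin 3 → ℤ := ![0, 1, 0]
def h₃ : Fin 3 → ℤ := ![0, 0, 1]
def h₄ : Fin 3 → ℤ := ![-2, -1, 2]
def h₅ : Fin 3 → ℤ := ![1, -1, 1]
def h₆ : Fin 3 → ℤ := ![2, -2, 1]

/-- The additive submonoid of `ℤ³` generated by `h₁, …, h₆`. -/
def S : AddSubmonoid (Fin 3 → ℤ) :=
  AddSubmonoid.closure {h₁, h₂, h₃, h₄, h₅, h₆}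

section PositiveOnGenerators

variable {M N : Type*} [AddMonoid N] [Preorder N] [AddLeftMono N]

theorem eq_zero_or_map_pos_of_mem_closure [AddMonoid M] {s : Set M} (f : M →+ N)
    (hf : ∀ x ∈ s, 0 < f x) {x : M} (hx : x ∈ AddSubmonoid.closure s) : x = 0 ∨ 0 < f x := by
  induction hx using AddSubmonoid.closure_induction with
  | mem x hx => exact Or.inr (hf x hx)
  | zero => exact Or.inl rfl
  | add x y _ _ ihx ihy =>
    rcases ihx with rfl | hx
    · simpa only [zero_add] using ihy
    rcases ihy with rfl | hy
    · simpa only [add_zero] using Or.inr hx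
    · exact Or.inr (map_add f x y ▸ add_pos' hx hy)

theorem isPointed_closure_of_map_pos [AddGroup M] {s : Set M} (f : M →+ N)
    (hf : ∀ x ∈ s, 0 < f x) : (AddSubmonoid.closure s).IsPointed := by
  intro x hx hnx
  rcases eq_zero_or_map_pos_of_mem_closure f hf hx with hx₀ | hpos
  · exact hx₀
  rcases eq_zero_or_map_pos_of_mem_closure f hf hnx with hnx₀ | hnpos
  · exact neg_eq_zero.mp hnx₀
  have hsum : 0 < f x + f (-x) := add_pos' hpos hnpos
  rw [← map_add, add_neg_cancel, map_zero] at hsum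
  exact absurd hsum (lt_irrefl 0)

end PositiveOnGenerators

/-- The linear functional `u ↦ u₀ + u₁ + 2u₂`, used as a grading of `S` in which every generator has
positive degree. With weight `1` on the first two coordinates, positivity on `h₄` forces weight at
least `2` on the third. -/
def degree : (Fin 3 → ℤ) →ₗ[ℤ] ℤ :=
  dotProductBilin ℤ ℤ ![1, 1, 2]

theorem degree_apply (u : Fin 3 → ℤ) : degree u = u 0 + u 1 + 2 * u 2 := by
  simp [degree, dotProduct, Fin.sum_univ_three]

theorem degree_pos_of_mem_generators :
    ∀ u ∈ ({h₁, h₂, h₃, h₄, h₅, h₆} : Set (Fin 3 → ℤ)), 0 < degree u := by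
  rintro u (rfl | rfl | rfl | rfl | rfl | rfl) <;>
    simp [degree_apply, h₁, h₂, h₃, h₄, h₅, h₆]

/-- The semigroup `S` is pointed: `u ∈ S` and `-u ∈ S` imply `u = 0`. -/
theorem S_pointed : ∀ u ∈ S, -u ∈ S → u = 0 :=
  isPointed_closure_of_map_pos degree.toAddMonoidHom degree_pos_of_mem_generators
end

section
/- The additive submonoid S of ℤ³ generated by h₁,…,h₆ is not saturated: for u = (0,-1,1) one has 3u = h₄ + h₆ ∈ S, but u ∉ S. -/
/-- A submonoid `P` of `ℤ³` is saturated if `λ • u ∈ P` with `λ ≥ 1` implies `u ∈ P`. -/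
def Saturated (P : AddSubmonoid (Fin 3 → ℤ)) : Prop :=
  ∀ (u : Fin 3 → ℤ) (l : ℤ), 1 ≤ l → l • u ∈ P → u ∈ P

/-!
The linear form `x₀ + 2x₁ + 2x₂` is nonnegative on the generators of `S` and vanishes on exactly
`h₄` and `h₆`, so the elements of `S` on which it vanishes form the submonoid generated by `h₄` and
`h₆`. It vanishes on `u = (0, -1, 1)`; but `u = (h₄ + h₆) / 3` and `h₄`, `h₆` are linearly
independent, so `u` is not a combination of them with natural number coefficients.
-/

theorem closure_inf_mker_of_nonneg {M N : Type*} [AddZeroClass M] [AddZeroClass N] [PartialOrder N]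
    [AddLeftMono N] [AddRightMono N] (φ : M →+ N) {s : Set M} (hφ : ∀ x ∈ s, 0 ≤ φ x) :
    AddSubmonoid.closure s ⊓ AddMonoidHom.mker φ =
      AddSubmonoid.closure (s ∩ AddMonoidHom.mker φ) := by
  refine le_antisymm ?_ (le_inf (AddSubmonoid.closure_mono Set.inter_subset_left)
    (AddSubmonoid.closure_le.2 Set.inter_subset_right))
  rintro x ⟨hxs, hx₀⟩
  -- Nonnegativity on the whole closure is carried through the induction: in a sum of value zero it
  -- forces both summands to have value zero.
  suffices 0 ≤ φ x ∧ (φ x = 0 → x ∈ AddSubmonoid.closure (s ∩ AddMonoidHom.mker φ)) from this.2 hx₀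
  clear hx₀
  induction hxs using AddSubmonoid.closure_induction with
  | mem x hx => exact ⟨hφ x hx, fun hx₀ ↦ AddSubmonoid.subset_closure ⟨hx, hx₀⟩⟩
  | zero => exact ⟨(map_zero φ).ge, fun _ ↦ zero_mem _⟩
  | add x y _ _ ihx ihy =>
    rw [map_add, add_eq_zero_iff_of_nonneg ihx.1 ihy.1]
    exact ⟨add_nonneg ihx.1 ihy.1, fun ⟨hx₀, hy₀⟩ ↦ add_mem (ihx.2 hx₀) (ihy.2 hy₀)⟩

/-- The linear form `x₀ + 2x₁ + 2x₂`, whose kernel meets `S` in the face generated by `h₄` and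
`h₆`; it is encoded as the dot product with its coefficient vector. -/
def faceForm : (Fin 3 → ℤ) →+ ℤ :=
  (dotProductBilin ℤ ℤ ![1, 2, 2]).toAddMonoidHom

theorem faceForm_apply (x : Fin 3 → ℤ) : faceForm x = x 0 + 2 * x 1 + 2 * x 2 := by
  simp [faceForm, dotProduct, Fin.sum_univ_three]

theorem generators_inter_mker_faceForm :
    ({h₁, h₂, h₃, h₄, h₅, h₆} ∩ AddMonoidHom.mker faceForm : Set (Fin 3 → ℤ)) = {h₄, h₆} := by
  ext x
  simp only [Set.mem_inter_iff, Set.mem_insert_iff, Set.mem_singleton_iff, SetLike.mem_coe,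
    AddMonoidHom.mem_mker]
  constructor
  · rintro ⟨rfl | rfl | rfl | rfl | rfl | rfl, hx⟩ <;>
      simp_all [faceForm_apply, h₁, h₂, h₃, h₄, h₅, h₆]
  · rintro (rfl | rfl) <;> simp [faceForm_apply, h₄, h₆]

theorem S_inf_mker_faceForm : S ⊓ AddMonoidHom.mker faceForm = AddSubmonoid.closure {h₄, h₆} := by
  have generators_nonneg : ∀ x ∈ ({h₁, h₂, h₃, h₄, h₅, h₆} : Set (Fin 3 → ℤ)), 0 ≤ faceForm x := by
    rintro x (rfl | rfl | rfl | rfl | rfl | rfl) <;>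
      simp [faceForm_apply, h₁, h₂, h₃, h₄, h₅, h₆]
  rw [S, closure_inf_mker_of_nonneg faceForm generators_nonneg, generators_inter_mker_faceForm]

/-- The element `(h₄ + h₆) / 3` of `ℤ³`, which witnesses that `S` is not saturated. -/
def u : Fin 3 → ℤ := ![0, -1, 1]

theorem u_notMem_closure_h₄_h₆ : u ∉ AddSubmonoid.closure {h₄, h₆} := by
  rw [AddSubmonoid.mem_closure_pair]
  rintro ⟨m, n, h⟩
  have h_zero : -2 * (m : ℤ) + 2 * n = 0 := by simpa [u, h₄, h₆, mul_comm] using congrFun h 0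
  have h_one : -(m : ℤ) - 2 * n = -1 := by
    simpa [u, h₄, h₆, mul_comm, sub_eq_add_neg] using congrFun h 1
  omega

theorem u_notMem_S : u ∉ S := fun hS ↦
  u_notMem_closure_h₄_h₆ <| S_inf_mker_faceForm ▸ ⟨hS, by simp [faceForm_apply, u]⟩

theorem three_smul_u_eq_h₄_add_h₆ : (3 : ℤ) • u = h₄ + h₆ := by
  simp [u, h₄, h₆]

theorem h₄_add_h₆_mem_S : h₄ + h₆ ∈ S :=
  add_mem (AddSubmonoid.subset_closure (by simp)) (AddSubmonoid.subset_closure (by simp))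

/-- `S` is not saturated: for `u = (0,-1,1)` one has `3 • u = h₄ + h₆ ∈ S` but `u ∉ S`. -/
theorem S_not_saturated :
    ¬ Saturated S ∧
    (3 : ℤ) • (![0, -1, 1] : Fin 3 → ℤ) = h₄ + h₆ ∧
    h₄ + h₆ ∈ S ∧
    (![0, -1, 1] : Fin 3 → ℤ) ∉ S := by
  have not_saturated : ¬ Saturated S := fun hS ↦
    u_notMem_S (hS u 3 (by norm_num) (three_smul_u_eq_h₄_add_h₆ ▸ h₄_add_h₆_mem_S))
  exact ⟨not_saturated, three_smul_u_eq_h₄_add_h₆, h₄_add_h₆_mem_S, u_notMem_S⟩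
end

section
/- The additive submonoid of ℤ³ generated by the set 𝒢_{A₁} = {g₁,g₅,g₇} ∪ {g_j - g₁ : j ∈ {2,3,4,6,8}} ∪ {g_j - g₅ : j ∈ {2,3,4,6,8}} ∪ {g_j - g₇ : j ∈ {3,4,6,8}} equals the additive submonoid T generated by the six-element set H₂ = {g₂-g₁, g₃-g₁, g₄-g₁, g₅, g₆-g₁, g₆-g₇}. -/
def g₁ : Fin 3 → ℤ := ![-1, 1, 0]
def g₂ : Fin 3 → ℤ := ![0, -1, 1]
def g₃ : Fin 3 → ℤ := ![3, 0, -1]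
def g₄ : Fin 3 → ℤ := ![1, 0, 0]
def g₅ : Fin 3 → ℤ := ![-2, 3, -1]
def g₆ : Fin 3 → ℤ := ![-2, -1, 2]
def g₇ : Fin 3 → ℤ := ![2, 2, -2]
def g₈ : Fin 3 → ℤ := ![2, -2, 1]

/-- The generating set `𝒢_{A₁}` of the chart semigroup for `A₁ = {g₁, g₅, g₇}`. -/
def GA1 : Set (Fin 3 → ℤ) :=
  {g₁, g₅, g₇} ∪
  {g₂ - g₁, g₃ - g₁, g₄ - g₁, g₆ - g₁, g₈ - g₁} ∪
  {g₂ - g₅, g₃ - g₅, g₄ - g₅, g₆ - g₅, g₈ - g₅} ∪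
  {g₃ - g₇, g₄ - g₇, g₆ - g₇, g₈ - g₇}

/-- The smaller generating set `H₂`. -/
def H2 : Set (Fin 3 → ℤ) :=
  {g₂ - g₁, g₃ - g₁, g₄ - g₁, g₅, g₆ - g₁, g₆ - g₇}

/-! Everything is driven by the vector `δ = g₁ - g₅ = g₂ - g₁ = g₈ - g₄ = g₃ - g₇`, which lies in
`T` because of `g₂ - g₁`. Adding `δ` turns `g₅` into `g₁`, `g₄ - g₁` into `g₈ - g₁`, each `gⱼ - g₁`
into `gⱼ - g₅`, and `g₄ - g₇ = g₆ - g₁` into `g₈ - g₇`; finally `g₇ = (g₃ - g₁) + g₅`. -/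

theorem sub_mem_of_sub_mem_of_sub_mem {G M : Type*} [AddGroup G] [SetLike M G] [AddMemClass M G]
    {S : M} {a b c : G} (hab : a - b ∈ S) (hbc : b - c ∈ S) : a - c ∈ S :=
  sub_add_sub_cancel a b c ▸ add_mem hab hbc

theorem mem_of_sub_mem_of_mem {G M : Type*} [AddGroup G] [SetLike M G] [AddMemClass M G]
    {S : M} {a b : G} (hab : a - b ∈ S) (hb : b ∈ S) : a ∈ S :=
  sub_add_cancel a b ▸ add_mem hab hb

theorem closure_GA1_eq_closure_H2_general {G : Type*} [AddCommGroup G]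
    {x₁ x₂ x₃ x₄ x₅ x₆ x₇ x₈ : G}
    (rel₂₁ : x₂ - x₁ = x₁ - x₅) (rel₈₄ : x₈ - x₄ = x₁ - x₅) (rel₃₇ : x₃ - x₇ = x₁ - x₅)
    (rel₄₇ : x₄ - x₇ = x₆ - x₁) :
    AddSubmonoid.closure
        ({x₁, x₅, x₇} ∪
          {x₂ - x₁, x₃ - x₁, x₄ - x₁, x₆ - x₁, x₈ - x₁} ∪
          {x₂ - x₅, x₃ - x₅, x₄ - x₅, x₆ - x₅, x₈ - x₅} ∪
          {x₃ - x₇, x₄ - x₇, x₆ - x₇, x₈ - x₇}) =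
      AddSubmonoid.closure {x₂ - x₁, x₃ - x₁, x₄ - x₁, x₅, x₆ - x₁, x₆ - x₇} := by
  refine AddSubmonoid.closure_eq_of_le ?_ (AddSubmonoid.closure_mono ?_)
  · set T := AddSubmonoid.closure {x₂ - x₁, x₃ - x₁, x₄ - x₁, x₅, x₆ - x₁, x₆ - x₇} with hT
    obtain ⟨h₂₁, h₃₁, h₄₁, h₅, h₆₁, h₆₇⟩ : x₂ - x₁ ∈ T ∧ x₃ - x₁ ∈ T ∧ x₄ - x₁ ∈ T ∧ x₅ ∈ T ∧
        x₆ - x₁ ∈ T ∧ x₆ - x₇ ∈ T := by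
      simpa only [Set.insert_subset_iff, Set.singleton_subset_iff, SetLike.mem_coe] using
        AddSubmonoid.closure_le.mp hT.ge
    have h₁₅ : x₁ - x₅ ∈ T := rel₂₁ ▸ h₂₁
    have h₇₅ : x₇ - x₅ ∈ T := sub_eq_sub_iff_sub_eq_sub.mp rel₃₇ ▸ h₃₁
    have h₈₄ : x₈ - x₄ ∈ T := rel₈₄.symm ▸ h₁₅
    have h₃₇ : x₃ - x₇ ∈ T := rel₃₇.symm ▸ h₁₅
    have h₄₇ : x₄ - x₇ ∈ T := rel₄₇.symm ▸ h₆₁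
    have h₈₁ : x₈ - x₁ ∈ T := sub_mem_of_sub_mem_of_sub_mem h₈₄ h₄₁
    have h₈₇ : x₈ - x₇ ∈ T := sub_mem_of_sub_mem_of_sub_mem h₈₄ h₄₇
    have sub_x₅_mem {y : G} (hy : y - x₁ ∈ T) : y - x₅ ∈ T :=
      sub_mem_of_sub_mem_of_sub_mem hy h₁₅
    simp only [Set.union_subset_iff, Set.insert_subset_iff, Set.singleton_subset_iff,
      SetLike.mem_coe]
    exact ⟨⟨⟨⟨mem_of_sub_mem_of_mem h₁₅ h₅, h₅, mem_of_sub_mem_of_mem h₇₅ h₅⟩,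
      h₂₁, h₃₁, h₄₁, h₆₁, h₈₁⟩,
      sub_x₅_mem h₂₁, sub_x₅_mem h₃₁, sub_x₅_mem h₄₁, sub_x₅_mem h₆₁, sub_x₅_mem h₈₁⟩,
      h₃₇, h₄₇, h₆₇, h₈₇⟩
  · simp [Set.insert_subset_iff]

/-- The submonoid generated by `𝒢_{A₁}` equals the submonoid `T` generated by `H₂`. -/
theorem closure_GA1_eq_closure_H2 :
    AddSubmonoid.closure GA1 = AddSubmonoid.closure H2 :=
  closure_GA1_eq_closure_H2_general (by decide) (by decide) (by decide) (by decide)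
end

section
/- There exist a finitely generated pointed non-saturated additive submonoid S of ℤ³ whose group closure is ℤ³, a finite generating set H of S together with a subset A = {a₁,a₂,a₃} ⊆ H with det(a₁ a₂ a₃) ≠ 0 such that the Nash chart semigroup S_A is pointed, and a finite generating set H' of S_A together with a subset A' = {b₁,b₂,b₃} ⊆ H' with det(b₁ b₂ b₃) ≠ 0, such that the Nash chart semigroup (S_A)_{A'} is pointed and there is a ℤ-linear automorphism of ℤ³ mapping S bijectively onto (S_A)_{A'}; in particular, the second iteration of the Nash blowup of the toric variety X(S) contains an affine chart isomorphic to X(S). -/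
/-- An additive submonoid `P` of `ℤ³` is pointed if `u ∈ P` and `-u ∈ P` imply `u = 0`. -/
def IsPointed (P : AddSubmonoid (Fin 3 → ℤ)) : Prop :=
  ∀ u ∈ P, -u ∈ P → u = 0

/-- The determinant of the `3 × 3` integer matrix whose columns are `a`, `b`, `c`. -/
def colDet (a b c : Fin 3 → ℤ) : ℤ := (Matrix.transpose (Matrix.of ![a, b, c])).det

/-- The generating set `𝒢_A = A ∪ 𝒢_A(a₁) ∪ 𝒢_A(a₂) ∪ 𝒢_A(a₃)` of the Nash chart
semigroup attached to a generating set `H` and a subset `A = {a₁, a₂, a₃} ⊆ H`, where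
`𝒢_A(aₖ) = {g - aₖ : g ∈ H \ A`, the matrix obtained from `(a₁ a₂ a₃)` by replacing the
column `aₖ` with `g` has nonzero determinant`}`. -/
def nashGens (H : Set (Fin 3 → ℤ)) (a₁ a₂ a₃ : Fin 3 → ℤ) : Set (Fin 3 → ℤ) :=
  {a₁, a₂, a₃} ∪
  ((fun g => g - a₁) '' {g ∈ H \ {a₁, a₂, a₃} | colDet g a₂ a₃ ≠ 0}) ∪
  ((fun g => g - a₂) '' {g ∈ H \ {a₁, a₂, a₃} | colDet a₁ g a₃ ≠ 0}) ∪
  ((fun g => g - a₃) '' {g ∈ H \ {a₁, a₂, a₃} | colDet a₁ a₂ g ≠ 0})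

/-- The Nash chart semigroup `P_A`: the additive submonoid generated by `𝒢_A`. -/
def nashChart (H : Set (Fin 3 → ℤ)) (a₁ a₂ a₃ : Fin 3 → ℤ) : AddSubmonoid (Fin 3 → ℤ) :=
  AddSubmonoid.closure (nashGens H a₁ a₂ a₃)

/-!
The example is explicit, and each of its properties reduces to a finite check. To identify a Nash
chart with the semigroup generated by a set `G`, it suffices that `G` consists of Nash generators
and that every Nash generator is a sum of boundedly many elements of `G`. A semigroup is pointed as
soon as some linear functional is positive on its generators. Finally, the functional `(1, 2, 2)`
grades `S` in positive degrees, so an element of degree `1` must be a generator; but `(-1, 0, 1)`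
has degree `1` and is not a generator, while its double `(1, -1, 1) + (-3, 1, 1)` lies in `S`.
-/

open scoped Pointwise

section Closure

variable {M : Type*} [AddMonoid M] {s t : Set M}

lemma addSubmonoidClosure_eq_of_subset_nsmul_insert_zero {n : ℕ} (hts : t ⊆ s)
    (hst : s ⊆ n • insert 0 t) : AddSubmonoid.closure s = AddSubmonoid.closure t := by
  refine le_antisymm (AddSubmonoid.closure_le.2 ?_) (AddSubmonoid.closure_mono hts)
  have hinsert : insert 0 t ⊆ (AddSubmonoid.closure t : Set M) :=
    Set.insert_subset (zero_mem _) AddSubmonoid.subset_closure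
  exact hst.trans (AddSubmonoid.nsmul_subset hinsert)

lemma eq_zero_or_mem_or_two_le_of_mem_closure (φ : M →+ ℤ) (hφ : ∀ g ∈ s, 0 < φ g) {x : M}
    (hx : x ∈ AddSubmonoid.closure s) : x = 0 ∨ x ∈ s ∨ 2 ≤ φ x := by
  have one_le_of_mem_or {y : M} (hy : y ∈ s ∨ 2 ≤ φ y) : 1 ≤ φ y :=
    hy.elim (hφ y) one_le_two.trans
  induction hx using AddSubmonoid.closure_induction with
  | mem x hx => exact .inr (.inl hx)
  | zero => exact .inl rfl
  | add x y _ _ ihx ihy =>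
    rcases ihx with rfl | ihx
    · simpa only [zero_add] using ihy
    rcases ihy with rfl | ihy
    · simpa only [add_zero] using .inr ihx
    right; right
    rw [map_add]
    linarith [one_le_of_mem_or ihx, one_le_of_mem_or ihy]

lemma pos_of_mem_closure_of_ne_zero (φ : M →+ ℤ) (hφ : ∀ g ∈ s, 0 < φ g) {x : M}
    (hx : x ∈ AddSubmonoid.closure s) (hx0 : x ≠ 0) : 0 < φ x := by
  rcases eq_zero_or_mem_or_two_le_of_mem_closure φ hφ hx with h | h | h
  · exact absurd h hx0
  · exact hφ x h
  · exact two_pos.trans_le h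

lemma mem_of_mem_closure_of_eq_one (φ : M →+ ℤ) (hφ : ∀ g ∈ s, 0 < φ g) {x : M}
    (hx : x ∈ AddSubmonoid.closure s) (hx1 : φ x = 1) : x ∈ s := by
  rcases eq_zero_or_mem_or_two_le_of_mem_closure φ hφ hx with rfl | h | h
  · simp only [map_zero, zero_ne_one] at hx1
  · exact h
  · lia

end Closure

lemma addSubgroupClosure_eq_top_of_single_mem {ι : Type*} [Finite ι] [DecidableEq ι]
    {s : Set (ι → ℤ)} (hs : ∀ i, Pi.single i 1 ∈ s) : AddSubgroup.closure s = ⊤ := by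
  have hspan : Submodule.span ℤ s = ⊤ := by
    rw [eq_top_iff, ← (Pi.basisFun ℤ ι).span_eq]
    refine Submodule.span_mono (Set.range_subset_iff.2 fun i ↦ ?_)
    simpa only [Pi.basisFun_apply] using hs i
  rw [← Submodule.span_int_eq_addSubgroupClosure, hspan, Submodule.top_toAddSubgroup]

/-- The linear functional `x ↦ w ⬝ᵥ x` on `ℤⁿ`, used as a grading of subsemigroups. -/
def weight {ι : Type*} [Fintype ι] (w : ι → ℤ) : (ι → ℤ) →+ ℤ :=
  (dotProductBilin ℤ ℤ w).toAddMonoidHom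

lemma isPointed_closure_of_pos {s : Set (Fin 3 → ℤ)} (φ : (Fin 3 → ℤ) →+ ℤ)
    (hφ : ∀ g ∈ s, 0 < φ g) : IsPointed (AddSubmonoid.closure s) := by
  intro u hu hneg
  by_contra hu0
  have hpos : 0 < φ u := pos_of_mem_closure_of_ne_zero φ hφ hu hu0
  have hpos' : 0 < φ (-u) := pos_of_mem_closure_of_ne_zero φ hφ hneg (neg_ne_zero.2 hu0)
  rw [map_neg] at hpos'
  lia

/-- The finset version of `nashGens`, on which membership is decidable by evaluation. -/
def nashGensFinset (H : Finset (Fin 3 → ℤ)) (a₁ a₂ a₃ : Fin 3 → ℤ) : Finset (Fin 3 → ℤ) :=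
  {a₁, a₂, a₃} ∪
  {g ∈ H \ {a₁, a₂, a₃} | colDet g a₂ a₃ ≠ 0}.image (· - a₁) ∪
  {g ∈ H \ {a₁, a₂, a₃} | colDet a₁ g a₃ ≠ 0}.image (· - a₂) ∪
  {g ∈ H \ {a₁, a₂, a₃} | colDet a₁ a₂ g ≠ 0}.image (· - a₃)

lemma coe_nashGensFinset (H : Finset (Fin 3 → ℤ)) (a₁ a₂ a₃ : Fin 3 → ℤ) :
    (nashGensFinset H a₁ a₂ a₃ : Set (Fin 3 → ℤ)) = nashGens H a₁ a₂ a₃ := by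
  simp only [nashGensFinset, nashGens, Finset.coe_union, Finset.coe_image, Finset.coe_filter,
    Finset.coe_insert, Finset.coe_singleton, Finset.mem_sdiff, Finset.mem_insert,
    Finset.mem_singleton, Set.mem_sdiff, Set.mem_insert_iff, Set.mem_singleton_iff, Finset.mem_coe]

lemma nashChart_eq_closure {H G : Finset (Fin 3 → ℤ)} {a₁ a₂ a₃ : Fin 3 → ℤ} (n : ℕ)
    (hG : G ⊆ nashGensFinset H a₁ a₂ a₃) (hsum : nashGensFinset H a₁ a₂ a₃ ⊆ n • insert 0 G) :
    nashChart H a₁ a₂ a₃ = AddSubmonoid.closure G := by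
  rw [nashChart, ← coe_nashGensFinset]
  exact addSubmonoidClosure_eq_of_subset_nsmul_insert_zero (n := n) (mod_cast hG) (mod_cast hsum)

/-- Generators of the semigroup `S` that the second iteration of the Nash blowup reproduces. -/
def loopGens : Finset (Fin 3 → ℤ) :=
  {![1, 0, 0], ![0, 1, 0], ![0, 0, 1], ![1, -1, 1], ![0, 2, -1], ![-3, 1, 1]}

/-- Generators of the chart semigroup `S_A`, `A = {(1, 0, 0), (0, 2, -1), (-3, 1, 1)}`. They are
the Nash generators of `loopGens` that are not sums of two Nash generators. -/
def loopChartGens : Finset (Fin 3 → ℤ) :=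
  {![1, 0, 0], ![0, 2, -1], ![-3, 1, 1], ![0, -1, 1], ![-1, 1, 0], ![1, -3, 2], ![3, 0, -1],
    ![4, -2, 0]}

/-- The automorphism of `ℤ³` carrying `S` onto the chart semigroup `(S_A)_{A'}`,
`A' = {(0, -1, 1), (1, -3, 2), (4, -2, 0)}`. In `Matrix.toLin'OfInv` the matrix of the map itself
is `M'`, and `M` is its inverse. -/
def loopEquiv : (Fin 3 → ℤ) ≃ₗ[ℤ] (Fin 3 → ℤ) :=
  Matrix.toLin'OfInv (M' := !![-1, -3, 1; 2, 2, 1; -1, 0, -1])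
    (M := !![-2, -3, -5; 1, 2, 3; 2, 3, 4]) (by decide) (by decide)

lemma nashChart_loopGens :
    nashChart loopGens ![1, 0, 0] ![0, 2, -1] ![-3, 1, 1] = AddSubmonoid.closure loopChartGens :=
  nashChart_eq_closure 2 (by decide) (by decide)

set_option maxRecDepth 4000 in
lemma nashChart_loopChartGens :
    nashChart loopChartGens ![0, -1, 1] ![1, -3, 2] ![4, -2, 0] =
      AddSubmonoid.closure (loopGens.image loopEquiv) :=
  nashChart_eq_closure 3 (by decide) (by decide)

lemma map_loopEquiv_closure :
    (AddSubmonoid.closure (loopGens : Set (Fin 3 → ℤ))).map loopEquiv.toLinearMap.toAddMonoidHom =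
      nashChart loopChartGens ![0, -1, 1] ![1, -3, 2] ![4, -2, 0] := by
  rw [nashChart_loopChartGens, AddMonoidHom.map_mclosure, Finset.coe_image]
  rfl

lemma weight_pos_of_mem_loopGens : ∀ g ∈ (loopGens : Set (Fin 3 → ℤ)), 0 < weight ![1, 2, 2] g := by
  decide

lemma not_saturated_closure_loopGens : ¬ Saturated (AddSubmonoid.closure loopGens) := by
  intro hsat
  have hsum : (2 : ℤ) • ![-1, 0, 1] = (![1, -1, 1] + ![-3, 1, 1] : Fin 3 → ℤ) := by decide
  have hdouble : (2 : ℤ) • ![-1, 0, 1] ∈ AddSubmonoid.closure (loopGens : Set (Fin 3 → ℤ)) := by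
    rw [hsum]
    exact add_mem (AddSubmonoid.subset_closure (by decide))
      (AddSubmonoid.subset_closure (by decide))
  have hmem : ![-1, 0, 1] ∈ (loopGens : Set (Fin 3 → ℤ)) :=
    mem_of_mem_closure_of_eq_one (weight ![1, 2, 2]) weight_pos_of_mem_loopGens
      (hsat _ 2 one_le_two hdouble) (by decide)
  exact absurd hmem (by decide)

/-- There exist a finitely generated pointed non-saturated submonoid `S ⊆ ℤ³` with group
closure `ℤ³`, a chart `A = {a₁,a₂,a₃}` of the Nash blowup of `X(S)` whose semigroup `S_A` is
pointed, and a chart `A' = {b₁,b₂,b₃}` of the Nash blowup of `X(S_A)` whose semigroup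
`(S_A)_{A'}` is pointed and is mapped onto `S` by a `ℤ`-linear automorphism of `ℤ³`: the
second iteration of the Nash blowup of `X(S)` contains an affine chart isomorphic to
`X(S)`. -/
theorem nash_blowup_fails_dim_three :
    ∃ (H : Set (Fin 3 → ℤ)) (a₁ a₂ a₃ : Fin 3 → ℤ)
      (H' : Set (Fin 3 → ℤ)) (b₁ b₂ b₃ : Fin 3 → ℤ),
      H.Finite ∧
      IsPointed (AddSubmonoid.closure H) ∧
      ¬ Saturated (AddSubmonoid.closure H) ∧
      AddSubgroup.closure H = ⊤ ∧
      {a₁, a₂, a₃} ⊆ H ∧ colDet a₁ a₂ a₃ ≠ 0 ∧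
      IsPointed (nashChart H a₁ a₂ a₃) ∧
      H'.Finite ∧
      AddSubmonoid.closure H' = nashChart H a₁ a₂ a₃ ∧
      {b₁, b₂, b₃} ⊆ H' ∧ colDet b₁ b₂ b₃ ≠ 0 ∧
      IsPointed (nashChart H' b₁ b₂ b₃) ∧
      ∃ e : (Fin 3 → ℤ) ≃ₗ[ℤ] (Fin 3 → ℤ),
        AddSubmonoid.map e.toLinearMap.toAddMonoidHom (AddSubmonoid.closure H) =
          nashChart H' b₁ b₂ b₃ := by
  refine ⟨loopGens, ![1, 0, 0], ![0, 2, -1], ![-3, 1, 1],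
    loopChartGens, ![0, -1, 1], ![1, -3, 2], ![4, -2, 0],
    loopGens.finite_toSet, isPointed_closure_of_pos _ weight_pos_of_mem_loopGens,
    not_saturated_closure_loopGens, addSubgroupClosure_eq_top_of_single_mem (by decide),
    by simp [Set.insert_subset_iff, loopGens], by decide, ?_,
    loopChartGens.finite_toSet, nashChart_loopGens.symm,
    by simp [Set.insert_subset_iff, loopChartGens], by decide, ?_, loopEquiv, map_loopEquiv_closure⟩
  -- `(4, 7, 9)` is the pullback of `(1, 2, 2)` along `loopEquiv.symm`, hence positive on the
  -- generators of `(S_A)_{A'}`, which contains `S_A`.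
  · rw [nashChart_loopGens]
    exact isPointed_closure_of_pos (weight ![4, 7, 9]) (by decide)
  · rw [nashChart_loopChartGens]
    exact isPointed_closure_of_pos (weight ![4, 7, 9]) (by decide)
end
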